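/- arXiv:1701.01085 — 2 statements merged into one kernel-verified Lean document; each statement's English description precedes it below -/
import Mathlib

section
/- Let −∞ ≤ l < r ≤ ∞, let s : (l,r) → (0,1) be continuously differentiable with s' > 0, lim_{x→l} s(x) = 0 and lim_{x→r} s(x) = 1, and fix y* ∈ (l,r). Define u(z) := s(z)(1 − s(y*)) for z ≤ y* and u(z) := s(y*)(1 − s(z)) for z > y*. Then for every x ≤ y*: ∫ₓ^{y*} s'(z)/u(z)² dz = (1/(1−s(y*))²)·(1/s(x) − 1/s(y*)); for every x ≥ y*: ∫_{y*}^x s'(z)/u(z)² dz = (1/s(y*)²)·(1/(1−s(x)) − 1/(1−s(y*))); and consequently ∫ₓ^{y*} s'(z)/u(z)² dz → ∞ as x → l and ∫_{y*}^x s'(z)/u(z)² dz → ∞ as x → r. -/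
open MeasureTheory Set Filter
open scoped ENNReal

/-- The open interval `(l,r)` with `EReal` endpoints, viewed as a set of reals. -/
def Iab (l r : EReal) : Set ℝ := {x : ℝ | l < (x : EReal) ∧ (x : EReal) < r}

/-- The filter of real numbers in `(l,r)` approaching the (possibly infinite) point `a`. -/
noncomputable def nearFilter (a l r : EReal) : Filter ℝ :=
  Filter.comap (fun x : ℝ => (x : EReal)) (nhds a) ⊓ Filter.principal (Iab l r)

/-!
On each side of `y*` the potential density `u` is a constant multiple of `f = s` (on the left) or of
`f = 1 - s` (on the right), so `s' / u²` is up to a constant factor the derivative of `1 / f`. The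
explicit formulas are the fundamental theorem of calculus, and the integrals diverge because `f`
tends to `0` through positive values at the corresponding boundary.
-/

open Topology

theorem ordConnected_Iab (l r : EReal) : (Iab l r).OrdConnected :=
  ordConnected_Ioo.preimage_mono EReal.coe_strictMono.monotone

theorem eventually_mem_Iab_nearFilter (a l r : EReal) : ∀ᶠ x in nearFilter a l r, x ∈ Iab l r :=
  mem_inf_of_right (mem_principal_self _)

theorem eventually_lt_nearFilter {a : EReal} (l r : EReal) {y : ℝ} (hay : a < y) :
    ∀ᶠ x in nearFilter a l r, x < y :=
  mem_inf_of_left ⟨Iio (y : EReal), Iio_mem_nhds hay, fun _ hx => EReal.coe_lt_coe_iff.1 hx⟩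

theorem eventually_gt_nearFilter {a : EReal} (l r : EReal) {y : ℝ} (hya : y < a) :
    ∀ᶠ x in nearFilter a l r, y < x :=
  mem_inf_of_left ⟨Ioi (y : EReal), Ioi_mem_nhds hya, fun _ hx => EReal.coe_lt_coe_iff.1 hx⟩

theorem integral_deriv_div_sq {𝕜 : Type*} [NontriviallyNormedField 𝕜] [NormedAlgebra ℝ 𝕜]
    [CompleteSpace 𝕜] {f f' : ℝ → 𝕜} {a b : ℝ} (hderiv : ∀ x ∈ uIcc a b, HasDerivAt f (f' x) x)
    (hint : IntervalIntegrable f' volume a b) (hne : ∀ x ∈ uIcc a b, f x ≠ 0) :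
    ∫ x in a..b, f' x / f x ^ 2 = 1 / f a - 1 / f b := by
  have hderiv_inv : ∀ x ∈ uIcc a b, HasDerivAt (fun x => -(f x)⁻¹) (f' x / f x ^ 2) x :=
    fun x hx => ((hderiv x hx).fun_inv (hne x hx)).fun_neg.congr_deriv (by rw [neg_div, neg_neg])
  have hcont : ContinuousOn (fun x => (f x ^ 2)⁻¹) (uIcc a b) :=
    ((HasDerivAt.continuousOn hderiv).pow 2).inv₀ fun x hx => pow_ne_zero 2 (hne x hx)
  have hint_div : IntervalIntegrable (fun x => f' x / f x ^ 2) volume a b := by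
    simpa only [div_eq_mul_inv] using hint.mul_continuousOn hcont
  rw [intervalIntegral.integral_eq_sub_of_hasDerivAt hderiv_inv hint_div]
  ring

theorem tendsto_const_mul_one_div_sub_atTop {α 𝕜 : Type*} [Field 𝕜] [LinearOrder 𝕜]
    [IsStrictOrderedRing 𝕜] [TopologicalSpace 𝕜] [OrderTopology 𝕜] {F : Filter α} {f : α → 𝕜}
    {c : 𝕜} (hc : 0 < c) (b : 𝕜) (hf : Tendsto f F (𝓝[>] 0)) :
    Tendsto (fun x => c * (1 / f x - b)) F atTop := by
  simp only [one_div, sub_eq_add_neg]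
  exact (tendsto_atTop_add_const_right F (-b) hf.inv_tendsto_nhdsGT_zero).const_mul_atTop hc

/-- The potential density `u(z, y) = s(z ∧ y) (1 - s(z ∨ y))` of a transient diffusion whose scale
function `s` is normalized to take the values `0` and `1` at the two boundaries. It is written as a
case distinction, whose two formulas agree at `z = y`. -/
noncomputable def potentialDensity (s : ℝ → ℝ) (y z : ℝ) : ℝ :=
  if z ≤ y then s z * (1 - s y) else s y * (1 - s z)

section potentialDensity

variable {s s' : ℝ → ℝ} {x y z : ℝ}

theorem potentialDensity_of_le (hzy : z ≤ y) : potentialDensity s y z = s z * (1 - s y) :=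
  if_pos hzy

theorem potentialDensity_of_ge (hyz : y ≤ z) : potentialDensity s y z = s y * (1 - s z) := by
  rcases hyz.eq_or_lt with rfl | hlt
  · exact potentialDensity_of_le le_rfl
  · exact if_neg hlt.not_ge

theorem integral_deriv_div_potentialDensity_sq_of_le (hxy : x ≤ y)
    (hderiv : ∀ z ∈ uIcc x y, HasDerivAt s (s' z) z) (hint : IntervalIntegrable s' volume x y)
    (hne : ∀ z ∈ uIcc x y, s z ≠ 0) :
    ∫ z in x..y, s' z / potentialDensity s y z ^ 2
      = (1 / (1 - s y) ^ 2) * (1 / s x - 1 / s y) := by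
  have hintegrand : EqOn (fun z => s' z / potentialDensity s y z ^ 2)
      (fun z => (1 / (1 - s y) ^ 2) * (s' z / s z ^ 2)) (uIcc x y) := fun z hz => by
    rw [uIcc_of_le hxy] at hz
    simp only [potentialDensity_of_le hz.2, mul_pow, one_div_mul_eq_div, div_div]
  rw [intervalIntegral.integral_congr hintegrand, intervalIntegral.integral_const_mul,
    integral_deriv_div_sq hderiv hint hne]

theorem integral_deriv_div_potentialDensity_sq_of_ge (hyx : y ≤ x)
    (hderiv : ∀ z ∈ uIcc y x, HasDerivAt s (s' z) z) (hint : IntervalIntegrable s' volume y x)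
    (hne : ∀ z ∈ uIcc y x, 1 - s z ≠ 0) :
    ∫ z in y..x, s' z / potentialDensity s y z ^ 2
      = (1 / s y ^ 2) * (1 / (1 - s x) - 1 / (1 - s y)) := by
  have hintegrand : EqOn (fun z => s' z / potentialDensity s y z ^ 2)
      (fun z => -(1 / s y ^ 2) * (-s' z / (1 - s z) ^ 2)) (uIcc y x) := fun z hz => by
    rw [uIcc_of_le hyx] at hz
    simp only [potentialDensity_of_ge hz.1, mul_pow, neg_div, neg_mul_neg,
      div_mul_div_comm, one_mul]
  rw [intervalIntegral.integral_congr hintegrand, intervalIntegral.integral_const_mul,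
    integral_deriv_div_sq (fun z hz => (hderiv z hz).const_sub 1) hint.neg hne]
  ring

end potentialDensity

theorem stmt_5_general (l r : EReal) (y : ℝ) (hy : y ∈ Iab l r) (s s' : ℝ → ℝ)
    (hderiv : ∀ x ∈ Iab l r, HasDerivAt s (s' x) x)
    (hint : LocallyIntegrableOn s' (Iab l r))
    (hrange : ∀ x ∈ Iab l r, s x ∈ Ioo (0 : ℝ) 1)
    (hl : Tendsto s (nearFilter l l r) (𝓝 0))
    (hr : Tendsto s (nearFilter r l r) (𝓝 1)) :
    (∀ x ∈ Iab l r, x ≤ y →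
      ∫ z in x..y, s' z / potentialDensity s y z ^ 2
        = (1 / (1 - s y) ^ 2) * (1 / s x - 1 / s y)) ∧
    (∀ x ∈ Iab l r, y ≤ x →
      ∫ z in y..x, s' z / potentialDensity s y z ^ 2
        = (1 / s y ^ 2) * (1 / (1 - s x) - 1 / (1 - s y))) ∧
    Tendsto (fun x => ∫ z in x..y, s' z / potentialDensity s y z ^ 2) (nearFilter l l r) atTop ∧
    Tendsto (fun x => ∫ z in y..x, s' z / potentialDensity s y z ^ 2) (nearFilter r l r) atTop := by
  have hsub {a b : ℝ} (ha : a ∈ Iab l r) (hb : b ∈ Iab l r) : uIcc a b ⊆ Iab l r :=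
    (ordConnected_Iab l r).uIcc_subset ha hb
  have hint' {a b : ℝ} (ha : a ∈ Iab l r) (hb : b ∈ Iab l r) : IntervalIntegrable s' volume a b :=
    (hint.integrableOn_compact_subset (hsub ha hb) isCompact_uIcc).intervalIntegrable
  have hs_pos : ∀ x ∈ Iab l r, 0 < s x := fun x hx => (hrange x hx).1
  have hone_sub_pos : ∀ x ∈ Iab l r, 0 < 1 - s x := fun x hx => sub_pos.2 (hrange x hx).2
  have hleft : ∀ x ∈ Iab l r, x ≤ y → ∫ z in x..y, s' z / potentialDensity s y z ^ 2
      = (1 / (1 - s y) ^ 2) * (1 / s x - 1 / s y) := fun x hx hxy =>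
    integral_deriv_div_potentialDensity_sq_of_le hxy (fun z hz => hderiv z (hsub hx hy hz))
      (hint' hx hy) fun z hz => (hs_pos z (hsub hx hy hz)).ne'
  have hright : ∀ x ∈ Iab l r, y ≤ x → ∫ z in y..x, s' z / potentialDensity s y z ^ 2
      = (1 / s y ^ 2) * (1 / (1 - s x) - 1 / (1 - s y)) := fun x hx hyx =>
    integral_deriv_div_potentialDensity_sq_of_ge hyx (fun z hz => hderiv z (hsub hy hx hz))
      (hint' hy hx) fun z hz => (hone_sub_pos z (hsub hy hx hz)).ne'
  refine ⟨hleft, hright, ?_, ?_⟩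
  · have hs : Tendsto s (nearFilter l l r) (𝓝[>] 0) :=
      tendsto_nhdsWithin_iff.2 ⟨hl, (eventually_mem_Iab_nearFilter l l r).mono hs_pos⟩
    refine (tendsto_const_mul_one_div_sub_atTop (c := 1 / (1 - s y) ^ 2)
      (one_div_pos.2 (pow_pos (hone_sub_pos y hy) 2)) (1 / s y) hs).congr' ?_
    filter_upwards [eventually_mem_Iab_nearFilter l l r, eventually_lt_nearFilter l r hy.1]
      with x hx hxy using (hleft x hx hxy.le).symm
  · have hs : Tendsto (fun x => 1 - s x) (nearFilter r l r) (𝓝[>] 0) :=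
      tendsto_nhdsWithin_iff.2 ⟨sub_self (1 : ℝ) ▸ hr.const_sub 1,
        (eventually_mem_Iab_nearFilter r l r).mono hone_sub_pos⟩
    refine (tendsto_const_mul_one_div_sub_atTop (c := 1 / s y ^ 2)
      (one_div_pos.2 (pow_pos (hs_pos y hy) 2)) (1 / (1 - s y)) hs).congr' ?_
    filter_upwards [eventually_mem_Iab_nearFilter r l r, eventually_gt_nearFilter l r hy.2]
      with x hx hyx using (hright x hx hyx.le).symm

/-- Explicit formulas for the transformed scale `s_u(x) = ∫ s'/u(·,y*)²` of a transient
diffusion with scale `s` (normalized to `(0,1)`) and potential density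
`u(z) = s(z∧y*)(1−s(z∨y*))`, together with its divergence at both boundaries. -/
theorem stmt_5 (l r : EReal) (hlr : l < r) (ystar : ℝ) (hy : ystar ∈ Iab l r)
    (s s' : ℝ → ℝ)
    (hderiv : ∀ x ∈ Iab l r, HasDerivAt s (s' x) x)
    (hcont : ContinuousOn s' (Iab l r))
    (hpos : ∀ x ∈ Iab l r, 0 < s' x)
    (hrange : ∀ x ∈ Iab l r, s x ∈ Set.Ioo (0 : ℝ) 1)
    (hl : Tendsto s (nearFilter l l r) (nhds 0))
    (hr : Tendsto s (nearFilter r l r) (nhds 1)) :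
    (∀ x ∈ Iab l r, x ≤ ystar →
      ∫ z in x..ystar,
          s' z / (if z ≤ ystar then s z * (1 - s ystar) else s ystar * (1 - s z)) ^ 2
        = (1 / (1 - s ystar) ^ 2) * (1 / s x - 1 / s ystar)) ∧
    (∀ x ∈ Iab l r, ystar ≤ x →
      ∫ z in ystar..x,
          s' z / (if z ≤ ystar then s z * (1 - s ystar) else s ystar * (1 - s z)) ^ 2
        = (1 / s ystar ^ 2) * (1 / (1 - s x) - 1 / (1 - s ystar))) ∧
    Tendsto (fun x => ∫ z in x..ystar,
        s' z / (if z ≤ ystar then s z * (1 - s ystar) else s ystar * (1 - s z)) ^ 2)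
      (nearFilter l l r) Filter.atTop ∧
    Tendsto (fun x => ∫ z in ystar..x,
        s' z / (if z ≤ ystar then s z * (1 - s ystar) else s ystar * (1 - s z)) ^ 2)
      (nearFilter r l r) Filter.atTop := by
  exact stmt_5_general l r ystar hy s s' hderiv
    (hcont.locallyIntegrableOn (ordConnected_Iab l r).measurableSet) hrange hl hr
end

section
/- Let −∞ ≤ l < r ≤ ∞, let σ : (l,r) → (0,∞) and b : (l,r) → ℝ be continuous, and let s : (l,r) → ℝ be twice continuously differentiable with s' > 0 and (1/2)σ(x)²·s''(x) + b(x)·s'(x) = 0 for all x ∈ (l,r). Fix y ∈ (l,r) and define u(x) := s(min(x,y))·(1 − s(max(x,y))). Then for every continuously differentiable f : (l,r) → ℝ with compact support, ∫_l^r f(x)·(b(x)/σ(x)²)·u'(x) dx = −(1/2)·( s'(y)·f(y) − ∫_l^r f'(x)·u'(x) dx ), where u' denotes the derivative of u, defined for x ≠ y. -/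
open MeasureTheory Set
open scoped ENNReal

/-!
On each side of `y` the derivative of `u` is a constant multiple of `s'`, the two constants
being `1 - s y` on the left and `-s y` on the right. Integrating `(f s')' = f' s' + f s''`
against this two-valued weight leaves only the boundary terms at `y`, and these add up to
`f y * s' y` because the weight drops by exactly `1` there. Harmonicity of `s` turns `s''` into
`-2 (b / σ ^ 2) s'`.
-/

lemma isOpen_Iab (l r : EReal) : IsOpen (Iab l r) :=
  isOpen_Ioo.preimage continuous_coe_real_ereal

lemma contDiffOn_one_of_hasDerivAt {𝕜 F : Type*} [NontriviallyNormedField 𝕜]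
    [NormedAddCommGroup F] [NormedSpace 𝕜 F] {U : Set 𝕜} {p p' : 𝕜 → F} (hU : IsOpen U)
    (hp : ∀ x ∈ U, HasDerivAt p (p' x) x) (hp' : ContinuousOn p' U) : ContDiffOn 𝕜 1 p U := by
  refine (contDiffOn_one_iff_derivWithin hU.uniqueDiffOn).2
    ⟨fun x hx ↦ (hp x hx).differentiableAt.differentiableWithinAt, hp'.congr fun x hx ↦ ?_⟩
  exact (hp x hx).hasDerivWithinAt.derivWithin (hU.uniqueDiffWithinAt hx)

lemma contDiff_smul_of_tsupport_subset {𝕜 E F : Type*} [NontriviallyNormedField 𝕜]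
    [NormedAddCommGroup E] [NormedSpace 𝕜 E] [NormedAddCommGroup F] [NormedSpace 𝕜 F]
    {n : WithTop ℕ∞} {U : Set E} {f : E → 𝕜} {p : E → F} (hU : IsOpen U) (hf : ContDiff 𝕜 n f)
    (hfU : tsupport f ⊆ U) (hp : ContDiffOn 𝕜 n p U) : ContDiff 𝕜 n fun x ↦ f x • p x := by
  refine contMDiff_iff_contDiff.1 (contMDiff_of_tsupport fun x hx ↦ ContDiffAt.contMDiffAt ?_)
  have hxU : x ∈ U := hfU (tsupport_smul_subset_left f p hx)
  exact hf.contDiffAt.smul (hp.contDiffAt (hU.mem_nhds hxU))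

lemma integrable_smul_of_tsupport_subset {X E : Type*} [TopologicalSpace X] [MeasurableSpace X]
    [OpensMeasurableSpace X] {μ : Measure X} [IsFiniteMeasureOnCompacts μ]
    [NormedAddCommGroup E] [NormedSpace ℝ E] {U : Set X} {f : X → ℝ} {p : X → E}
    (hU : IsOpen U) (hf : Continuous f) (hfc : HasCompactSupport f) (hfU : tsupport f ⊆ U)
    (hp : ContinuousOn p U) : Integrable (fun x ↦ f x • p x) μ :=
  ((hf.continuousOn.smul hp).continuous_of_tsupport_subset hU
    ((tsupport_smul_subset_left f p).trans hfU)).integrable_of_hasCompactSupport hfc.smul_right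

section TwoValuedWeight

variable {E : Type*} [NormedAddCommGroup E] [NormedSpace ℝ E]

lemma integrable_ite_smul {α : Type*} [MeasurableSpace α] {μ : Measure α} {P : α → Prop}
    [DecidablePred P] (hP : MeasurableSet {x | P x}) {g : α → E} (hg : Integrable g μ)
    (A B : ℝ) : Integrable (fun x ↦ (if P x then A else B) • g x) μ := by
  simp only [ite_smul]
  exact Integrable.piecewise (s := {x | P x}) hP (hg.smul A).integrableOn (hg.smul B).integrableOn

lemma integral_ite_smul {α : Type*} [MeasurableSpace α] {μ : Measure α} {P : α → Prop}
    [DecidablePred P] (hP : MeasurableSet {x | P x}) {g : α → E} (hg : Integrable g μ)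
    (A B : ℝ) : ∫ x, (if P x then A else B) • g x ∂μ =
      A • ∫ x in {x | P x}, g x ∂μ + B • ∫ x in {x | P x}ᶜ, g x ∂μ := by
  simp only [ite_smul, ← integral_smul]
  exact integral_piecewise (s := {x | P x}) hP (hg.smul A).integrableOn (hg.smul B).integrableOn

variable [CompleteSpace E]

lemma integral_ite_le_smul_deriv {g : ℝ → E} (hg : ContDiff ℝ 1 g) (hgc : HasCompactSupport g)
    (y A B : ℝ) : ∫ x, (if x ≤ y then A else B) • deriv g x = (A - B) • g y := by
  have hg' : Integrable (deriv g) :=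
    (hg.continuous_deriv le_rfl).integrable_of_hasCompactSupport hgc.deriv
  have hleft : ∫ x in {x | x ≤ y}, deriv g x = g y := hgc.integral_Iic_deriv_eq hg y
  have hright : ∫ x in {x | x ≤ y}ᶜ, deriv g x = -g y := by
    rw [← hgc.integral_Ioi_deriv_eq hg y, ← compl_Iic]
    rfl
  rw [integral_ite_smul measurableSet_Iic hg', hleft, hright, sub_smul, smul_neg, sub_eq_add_neg]

lemma setIntegral_ite_le_smul_by_parts {U : Set ℝ} {f : ℝ → ℝ} {p p' : ℝ → E} (hU : IsOpen U)
    (hf : ContDiff ℝ 1 f) (hfc : HasCompactSupport f) (hfU : tsupport f ⊆ U)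
    (hp : ∀ x ∈ U, HasDerivAt p (p' x) x) (hp' : ContinuousOn p' U) (y A B : ℝ) :
    (∫ x in U, (if x ≤ y then A else B) • f x • p' x) +
        ∫ x in U, (if x ≤ y then A else B) • deriv f x • p x =
      (A - B) • f y • p y := by
  have hpU : ContDiffOn ℝ 1 p U := contDiffOn_one_of_hasDerivAt hU hp hp'
  have hfp : ContDiff ℝ 1 fun x ↦ f x • p x := contDiff_smul_of_tsupport_subset hU hf hfU hpU
  have integrable_smul_deriv : Integrable fun x ↦ f x • p' x :=
    integrable_smul_of_tsupport_subset hU hf.continuous hfc hfU hp'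
  have integrable_deriv_smul : Integrable fun x ↦ deriv f x • p x :=
    integrable_smul_of_tsupport_subset hU (hf.continuous_deriv le_rfl) hfc.deriv
      (tsupport_deriv_subset.trans hfU) hpU.continuousOn
  have hderiv_zero : ∀ x ∉ U, deriv (fun x ↦ f x • p x) x = 0 := fun x hx ↦
    image_eq_zero_of_notMem_tsupport fun h ↦
      hx (hfU (tsupport_smul_subset_left f p (tsupport_deriv_subset h)))
  have hderiv : ∀ x ∈ U, deriv (fun x ↦ f x • p x) x = f x • p' x + deriv f x • p x := fun x hx ↦
    ((hf.differentiable one_ne_zero x).hasDerivAt.fun_smul (hp x hx)).deriv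
  calc (∫ x in U, (if x ≤ y then A else B) • f x • p' x) +
        ∫ x in U, (if x ≤ y then A else B) • deriv f x • p x
      = ∫ x in U, ((if x ≤ y then A else B) • f x • p' x +
          (if x ≤ y then A else B) • deriv f x • p x) :=
        (integral_add (integrable_ite_smul measurableSet_Iic integrable_smul_deriv A B).integrableOn
          (integrable_ite_smul measurableSet_Iic integrable_deriv_smul A B).integrableOn).symm
    _ = ∫ x in U, (if x ≤ y then A else B) • deriv (fun x ↦ f x • p x) x :=
        setIntegral_congr_fun hU.measurableSet fun x hx ↦ by simp only [hderiv x hx, smul_add]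
    _ = ∫ x, (if x ≤ y then A else B) • deriv (fun x ↦ f x • p x) x :=
        setIntegral_eq_integral_of_forall_compl_eq_zero fun x hx ↦ by
          rw [hderiv_zero x hx, smul_zero]
    _ = (A - B) • f y • p y := integral_ite_le_smul_deriv hfp hfc.smul_right y A B

end TwoValuedWeight

lemma div_sq_mul_eq_of_harmonic {K : Type*} [Field K] [NeZero (2 : K)] {σ b d d' : K}
    (hσ : σ ≠ 0) (h : (1 / 2) * σ ^ 2 * d' + b * d = 0) :
    b / σ ^ 2 * d = -(1 / 2) * d' := by
  field_simp at h ⊢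
  linear_combination h

theorem stmt_14_general {U : Set ℝ} (hU : IsOpen U) {σ b s s' s'' : ℝ → ℝ} (y : ℝ)
    (hσ : ∀ x ∈ U, σ x ≠ 0) (hs : ∀ x ∈ U, HasDerivAt s (s' x) x)
    (hs' : ∀ x ∈ U, HasDerivAt s' (s'' x) x) (hs'' : ContinuousOn s'' U)
    (hharm : ∀ x ∈ U, (1 / 2) * σ x ^ 2 * s'' x + b x * s' x = 0)
    {f : ℝ → ℝ} (hf : ContDiff ℝ 1 f) (hfc : HasCompactSupport f) (hfU : tsupport f ⊆ U) :
    ∫ x in U, f x * (b x / σ x ^ 2) *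
        (if x ≤ y then s' x * (1 - s y) else -(s' x * s y))
      = -(1 / 2) * (s' y * f y -
          ∫ x in U, deriv f x *
            (if x ≤ y then s' x * (1 - s y) else -(s' x * s y))) := by
  have hweight : ∀ x, (if x ≤ y then s' x * (1 - s y) else -(s' x * s y)) =
      (if x ≤ y then 1 - s y else -s y) * s' x := fun x ↦ by split_ifs <;> ring
  have hparts := setIntegral_ite_le_smul_by_parts hU hf hfc hfU hs' hs'' y (1 - s y) (-s y)
  have hdrift : ∫ x in U, f x * (b x / σ x ^ 2) * ((if x ≤ y then 1 - s y else -s y) * s' x) =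
      -(1 / 2) * ∫ x in U, (if x ≤ y then 1 - s y else -s y) • f x • s'' x := by
    rw [← integral_const_mul]
    refine setIntegral_congr_fun hU.measurableSet fun x hx ↦ ?_
    have hratio := div_sq_mul_eq_of_harmonic (hσ x hx) (hharm x hx)
    simp only [smul_eq_mul]
    linear_combination f x * (if x ≤ y then 1 - s y else -s y) * hratio
  simp only [hweight, hdrift, mul_left_comm (deriv f _)]
  simp only [smul_eq_mul] at hparts ⊢
  linear_combination -(1 / 2) * hparts

/-- Integration-by-parts identity for the potential density `u(x) = s(x∧y)(1−s(x∨y))` of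
a diffusion with harmonic scale `s` (i.e. `(1/2)σ²s'' + b s' = 0`): for every `C¹`
function `f` with compact support in `(l,r)`,
`∫ f·(b/σ²)·u' = −(1/2)(s'(y)·f(y) − ∫ f'·u')`, where `u'` is the derivative of `u`
away from `y`. -/
theorem stmt_14 (l r : EReal) (σ b : ℝ → ℝ) (s s' s'' : ℝ → ℝ) (y : ℝ) (hy : y ∈ Iab l r)
    (hσcont : ContinuousOn σ (Iab l r)) (hσpos : ∀ x ∈ Iab l r, 0 < σ x)
    (hbcont : ContinuousOn b (Iab l r))
    (hs1 : ∀ x ∈ Iab l r, HasDerivAt s (s' x) x)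
    (hs2 : ∀ x ∈ Iab l r, HasDerivAt s' (s'' x) x)
    (hs''cont : ContinuousOn s'' (Iab l r))
    (hs'pos : ∀ x ∈ Iab l r, 0 < s' x)
    (hharm : ∀ x ∈ Iab l r, (1 / 2) * σ x ^ 2 * s'' x + b x * s' x = 0)
    (f : ℝ → ℝ) (hf : ContDiff ℝ 1 f) (hsupp : HasCompactSupport f)
    (hfsupp : tsupport f ⊆ Iab l r) :
    ∫ x in Iab l r, f x * (b x / σ x ^ 2) *
        (if x ≤ y then s' x * (1 - s y) else -(s' x * s y))
      = -(1 / 2) * (s' y * f y -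
          ∫ x in Iab l r, deriv f x *
            (if x ≤ y then s' x * (1 - s y) else -(s' x * s y))) :=
  stmt_14_general (isOpen_Iab l r) y (fun x hx ↦ (hσpos x hx).ne') hs1 hs2 hs''cont hharm hf hsupp
    hfsupp
end
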